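/- Let θ be an irrational real number and let 𝕋 = ℝ/ℤ be the additive circle with Haar probability measure μ. There do not exist: a complex Hilbert space H; a unital star-algebra homomorphism π from C(𝕋, ℂ) to the algebra of bounded operators on H; a unitary operator U on H satisfying the covariance relation U π(f) U⁻¹ = π(f(·−θ)) for all f ∈ C(𝕋, ℂ); and an injective continuous linear map j : L¹(𝕋, μ) → H such that j(f·η) = π(f)(j(η)) for every f ∈ C(𝕋, ℂ) and η ∈ L¹(𝕋, μ) (where f·η is the pointwise product), and j(η(·−θ)) = U(j(η)) for every η ∈ L¹(𝕋, μ). -/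

import Mathlib

/-!
Since the constant function `1` is rotation invariant, the vector `v = j 1` is fixed by `U`, so
covariance makes `ω f = ⟪v, π f v⟫` a bounded functional on `C(𝕋)` invariant under rotation by `θ`.
As `θ` is irrational, such a functional kills every non-constant character, hence is a multiple of
Haar integration (`functional_eq`): `ω f = ‖v‖² ∫ f`. Therefore, for continuous `f`,
`‖j f‖² = ‖π f v‖² = ω (star f * f) = ‖v‖² ∫ |f|²`, while boundedness of `j` gives `‖j f‖ ≤ ‖j‖ ∫ |f|`.
Injectivity gives `v ≠ 0`, so the `L²` norm would be dominated by the `L¹` norm on `C(𝕋)`.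
Bump functions of width `r → 0` refute this: their `∫ |f|²` is at least `2r`, their `∫ |f|` at
most `4r`.
-/

open MeasureTheory

/-- The circle `ℝ/ℤ`. -/
abbrev T1 := AddCircle (1 : ℝ)

lemma fourier_ne_one {θ : ℝ} (hθ : Irrational θ) {n : ℤ} (hn : n ≠ 0) :
    fourier n (-(θ : T1)) ≠ 1 := by
  intro h
  rw [fourier_apply] at h
  have h1 : AddCircle.toCircle (n • (-(θ : T1))) = AddCircle.toCircle (0 : T1) := by
    rw [AddCircle.toCircle_zero]; exact Subtype.ext h
  have h2 := AddCircle.injective_toCircle one_ne_zero h1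
  have h3 : (((n : ℝ) * θ : ℝ) : T1) = 0 := by
    have : (((n • θ : ℝ)) : T1) = 0 := by
      rw [AddCircle.coe_zsmul]; simpa using h2
    simpa [zsmul_eq_mul] using this
  obtain ⟨m, hm⟩ := (AddCircle.coe_eq_zero_iff (1 : ℝ)).1 h3
  exact (hθ.intCast_mul hn).ne_int m (by simpa using hm.symm)

/-- Two bounded functionals on `C(𝕋)` that are invariant under an irrational rotation and agree on
`1` are equal: each vanishes on every non-constant character, and characters span densely. -/
lemma functional_eq {θ : ℝ} (hθ : Irrational θ) (Λ M : C(T1, ℂ) →L[ℂ] ℂ)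
    (hΛ : ∀ f g : C(T1, ℂ), (∀ t, g t = f (t - (θ : T1))) → Λ g = Λ f)
    (hM : ∀ f g : C(T1, ℂ), (∀ t, g t = f (t - (θ : T1))) → M g = M f)
    (h1 : Λ 1 = M 1) : Λ = M := by
  have key : ∀ L : C(T1, ℂ) →L[ℂ] ℂ,
      (∀ f g : C(T1, ℂ), (∀ t, g t = f (t - (θ : T1))) → L g = L f) →
      ∀ n : ℤ, n ≠ 0 → L (fourier n) = 0 := by
    intro L hL n hn
    have h := hL (fourier n) (fourier n (-(θ : T1)) • fourier n) (by
      intro t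
      simp [fourier_apply, sub_eq_add_neg, AddCircle.toCircle_add, mul_comm])
    -- Translation by `θ` multiplies `fourier n` by a scalar different from `1`.
    rw [map_smul, smul_eq_mul] at h
    by_contra h0
    exact fourier_ne_one hθ hn (mul_right_cancel₀ h0 (by rw [h, one_mul]))
  have : Fact (0 < (1 : ℝ)) := ⟨one_pos⟩
  refine ContinuousLinearMap.ext_on (s := Set.range (fourier (T := (1 : ℝ)))) ?_ ?_
  · exact Submodule.dense_iff_topologicalClosure_eq_top.2 span_fourier_closure_eq_top
  · rintro _ ⟨n, rfl⟩
    by_cases hn : n = 0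
    · subst hn
      have : (fourier 0 : C(T1, ℂ)) = 1 := by ext; simp
      rw [this, h1]
    · rw [key Λ hΛ n hn, key M hM n hn]

lemma integrable_of_continuous {E : Type*} [NormedAddCommGroup E] {f : T1 → E} (hf : Continuous f) :
    Integrable f :=
  hf.integrable_of_hasCompactSupport (HasCompactSupport.of_compactSpace f)

/-- Integration against Haar measure as a bounded functional on `C(𝕋)`. -/
noncomputable def integralFunctional : C(T1, ℂ) →L[ℂ] ℂ :=
  LinearMap.mkContinuous
    { toFun := fun f => ∫ t, f t
      map_add' := fun f g =>
        integral_add (integrable_of_continuous f.continuous) (integrable_of_continuous g.continuous)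
      map_smul' := fun a f => integral_const_mul a f }
    1 (fun f => by
      have h : ‖∫ t, f t‖ ≤ ‖f‖ * volume.real (Set.univ : Set T1) :=
        norm_integral_le_of_norm_le_const (Filter.Eventually.of_forall f.norm_coe_le_norm)
      simpa [Measure.real, AddCircle.measure_univ] using h)

lemma integralFunctional_apply (f : C(T1, ℂ)) : integralFunctional f = ∫ t, f t := rfl

/-- The trapezoidal bump around `0`, for `r > 0`: equal to `1` for `‖t‖ ≤ r` and to `0` for
`‖t‖ ≥ 2r`, linear in `‖t‖` in between. -/
noncomputable def bump (r : ℝ) : C(T1, ℂ) where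
  toFun t := ((max 0 (min 1 (2 - ‖t‖ / r)) : ℝ) : ℂ)
  continuous_toFun := by fun_prop

lemma norm_bump_le {r : ℝ} (hr : 0 < r) (t : T1) :
    ‖bump r t‖ ≤ (Metric.closedBall (0 : T1) (2 * r)).indicator (fun _ => (1 : ℝ)) t := by
  have e : ‖bump r t‖ = max 0 (min 1 (2 - ‖t‖ / r)) := by
    simp [bump, Complex.norm_real]
  rw [e]
  by_cases h : t ∈ Metric.closedBall (0 : T1) (2 * r)
  · simp [h]
  · rw [Set.indicator_of_notMem h]
    simp only [Metric.mem_closedBall, dist_zero_right, not_le] at h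
    have := (lt_div_iff₀ hr).2 h
    exact max_le le_rfl ((min_le_right _ _).trans (by linarith))

lemma le_norm_bump_sq {r : ℝ} (hr : 0 < r) (t : T1) :
    (Metric.closedBall (0 : T1) r).indicator (fun _ => (1 : ℝ)) t ≤ ‖bump r t‖ ^ 2 := by
  have e : ‖bump r t‖ = max 0 (min 1 (2 - ‖t‖ / r)) := by
    simp [bump, Complex.norm_real]
  by_cases h : t ∈ Metric.closedBall (0 : T1) r
  · rw [Set.indicator_of_mem h, e]
    simp only [Metric.mem_closedBall, dist_zero_right] at h
    have := (div_le_one hr).2 h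
    rw [min_eq_left (by linarith), max_eq_right zero_le_one]; norm_num
  · rw [Set.indicator_of_notMem h]; positivity

lemma integral_ball {r : ℝ} (hr : 0 < r) (hr' : 2 * r ≤ 1) :
    ∫ t : T1, (Metric.closedBall (0 : T1) r).indicator (fun _ => (1 : ℝ)) t = 2 * r := by
  have : Fact (0 < (1 : ℝ)) := ⟨one_pos⟩
  rw [integral_indicator_const _ measurableSet_closedBall, Measure.real,
    AddCircle.volume_closedBall, min_eq_right hr', ENNReal.toReal_ofReal (by positivity)]
  simp

lemma integral_norm_bump_le {r : ℝ} (hr : 0 < r) (hr' : 4 * r ≤ 1) :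
    ∫ t, ‖bump r t‖ ≤ 4 * r := by
  have h := integral_ball (r := 2 * r) (by positivity) (by linarith)
  rw [show 4 * r = 2 * (2 * r) by ring, ← h]
  refine integral_mono (integrable_of_continuous (by fun_prop)) ?_ (norm_bump_le hr)
  exact (integrable_const _).indicator measurableSet_closedBall

lemma le_integral_norm_bump_sq {r : ℝ} (hr : 0 < r) (hr' : 2 * r ≤ 1) :
    2 * r ≤ ∫ t, ‖bump r t‖ ^ 2 := by
  rw [← integral_ball hr hr']
  refine integral_mono ?_ (integrable_of_continuous (by fun_prop)) (le_norm_bump_sq hr)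
  exact (integrable_const _).indicator measurableSet_closedBall

/-- (Example 4.1.)  For irrational `θ` there is no star-representation of
the irrational rotation C*-algebra `A_θ = C*(ℤ, 𝕋)` — given by a covariant pair `(π, U)`
on a Hilbert space `H` — containing the `L¹(𝕋)`-module via an injective continuous linear
map `j` intertwining multiplication by continuous functions and rotation by `θ`. -/
theorem no_extension_of_L1_module_irrational_rotation (θ : ℝ) (hθ : Irrational θ)
    (H : Type) [NormedAddCommGroup H] [InnerProductSpace ℂ H] [CompleteSpace H]
    (π : C(AddCircle (1 : ℝ), ℂ) →⋆ₐ[ℂ] (H →L[ℂ] H))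
    (U : H →L[ℂ] H) (hU : U ∈ unitary (H →L[ℂ] H))
    (hcov : ∀ f g : C(AddCircle (1 : ℝ), ℂ),
      (∀ t, g t = f (t - (θ : AddCircle (1 : ℝ)))) → U * π f * star U = π g)
    (j : Lp ℂ 1 (volume : Measure (AddCircle (1 : ℝ))) →L[ℂ] H)
    (hj_inj : Function.Injective j)
    (hj_mul : ∀ (f : C(AddCircle (1 : ℝ), ℂ))
        (η ψ : Lp ℂ 1 (volume : Measure (AddCircle (1 : ℝ)))),
      (ψ : AddCircle (1 : ℝ) → ℂ) =ᵐ[volume]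
          (fun t => f t * (η : AddCircle (1 : ℝ) → ℂ) t) →
        j ψ = π f (j η))
    (hj_shift : ∀ η ψ : Lp ℂ 1 (volume : Measure (AddCircle (1 : ℝ))),
      (ψ : AddCircle (1 : ℝ) → ℂ) =ᵐ[volume]
          (fun t => (η : AddCircle (1 : ℝ) → ℂ) (t - (θ : AddCircle (1 : ℝ)))) →
        j ψ = U (j η)) :
    False := by
  set one : Lp ℂ 1 (volume : Measure T1) := ContinuousMap.toLp 1 volume ℂ (1 : C(T1, ℂ)) with hone
  have hone_ae : (one : T1 → ℂ) =ᵐ[volume] fun _ => (1 : ℂ) :=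
    ContinuousMap.coeFn_toLp (𝕜 := ℂ) volume (1 : C(T1, ℂ))
  set v : H := j one with hv
  have hv0 : v ≠ 0 := by
    intro h
    have h0 : one = 0 := hj_inj (by rw [← hv, h, map_zero])
    have h1 : (one : T1 → ℂ) =ᵐ[volume] 0 := by
      rw [h0]; exact Lp.coeFn_zero ℂ 1 volume
    obtain ⟨t, ht⟩ := (hone_ae.symm.trans h1).exists
    exact one_ne_zero ht
  have hjf : ∀ f : C(T1, ℂ), j (ContinuousMap.toLp 1 volume ℂ f) = π f v := by
    intro f
    refine hj_mul f one _ ?_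
    filter_upwards [hone_ae, ContinuousMap.coeFn_toLp (𝕜 := ℂ) (p := 1) volume f] with t h1 h2
    rw [h1, h2, mul_one]
  have hUv : U v = v := by
    refine (hj_shift one one ?_).symm
    have hq := (measurePreserving_sub_right (volume : Measure T1) (θ : T1)).quasiMeasurePreserving
    filter_upwards [hone_ae, hq.ae hone_ae] with t h1 h2
    rw [h1, h2]
  have hUv' : star U v = v := by
    have h : (star U * U) v = v := by rw [Unitary.star_mul_self_of_mem hU]; rfl
    rw [mul_apply_eq_comp, hUv] at h
    exact h
  let ω : C(T1, ℂ) →L[ℂ] ℂ :=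
    { toFun := fun f => inner ℂ v (π f v)
      map_add' := fun f g => by simp
      map_smul' := fun a f => by simp
      cont := by
        have hπ : Continuous π :=
          AddMonoidHomClass.continuous_of_bound π 1 fun f => by
            simpa using NonUnitalStarAlgHom.norm_apply_le π f
        fun_prop }
  have hωdef : ∀ f, ω f = inner ℂ v (π f v) := fun _ => rfl
  have hω : ω = ((‖v‖ : ℂ) ^ 2) • integralFunctional := by
    refine functional_eq hθ _ _ ?_ ?_ ?_
    · intro f g hfg
      rw [hωdef, hωdef, ← hcov f g hfg, mul_apply_eq_comp,
        mul_apply_eq_comp, hUv', ← ContinuousLinearMap.adjoint_inner_left,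
        ← ContinuousLinearMap.star_eq_adjoint, hUv']
    · intro f g hfg
      have : ∫ t, g t = ∫ t, f t := by
        simp_rw [hfg]
        exact integral_sub_right_eq_self (fun t => f t) (θ : T1)
      simp [integralFunctional_apply, this]
    · rw [hωdef, map_one]
      simp [integralFunctional_apply, Measure.real, AddCircle.measure_univ,
        inner_self_eq_norm_sq_to_K]
  have hnorm : ∀ f : C(T1, ℂ), ‖π f v‖ ^ 2 = ‖v‖ ^ 2 * ∫ t, ‖f t‖ ^ 2 := by
    intro f
    have h1 : ω (star f * f) = ((‖π f v‖ ^ 2 : ℝ) : ℂ) := by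
      rw [hωdef, map_mul, map_star, mul_apply_eq_comp,
        ContinuousLinearMap.star_eq_adjoint, ContinuousLinearMap.adjoint_inner_right,
        inner_self_eq_norm_sq_to_K]
      simp
    have h2 : ∫ t, (star f * f) t = ((∫ t, ‖f t‖ ^ 2 : ℝ) : ℂ) := by
      rw [← integral_complex_ofReal]
      refine integral_congr_ae (Filter.Eventually.of_forall fun t => ?_)
      simp [Complex.conj_mul']
    rw [hω] at h1
    simp only [_root_.smul_apply, integralFunctional_apply, h2, smul_eq_mul] at h1
    exact_mod_cast h1.symm
  have hbound : ∀ f : C(T1, ℂ), ‖v‖ ^ 2 * ∫ t, ‖f t‖ ^ 2 ≤ (‖j‖ * ∫ t, ‖f t‖) ^ 2 := by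
    intro f
    have h1 : ‖(ContinuousMap.toLp 1 volume ℂ f : Lp ℂ 1 (volume : Measure T1))‖ =
        ∫ t, ‖f t‖ := by
      rw [L1.norm_eq_integral_norm]
      refine integral_congr_ae ?_
      filter_upwards [ContinuousMap.coeFn_toLp (𝕜 := ℂ) (p := 1) volume f] with t h
      rw [h]
    rw [← hnorm, ← hjf, ← h1]
    gcongr
    exact j.le_opNorm _
  have hvpos : 0 < ‖v‖ ^ 2 := by positivity
  have hr : ∀ r : ℝ, 0 < r → 4 * r ≤ 1 → ‖v‖ ^ 2 ≤ 8 * ‖j‖ ^ 2 * r := by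
    intro r hr hr'
    have h1 := hbound (bump r)
    have h2 : (‖j‖ * ∫ t, ‖bump r t‖) ^ 2 ≤ (‖j‖ * (4 * r)) ^ 2 := by
      have := integral_norm_bump_le hr hr'
      have h0 : 0 ≤ ∫ t, ‖bump r t‖ := integral_nonneg fun t => norm_nonneg _
      gcongr
    have h3 : ‖v‖ ^ 2 * (2 * r) ≤ ‖v‖ ^ 2 * ∫ t, ‖bump r t‖ ^ 2 := by
      have := le_integral_norm_bump_sq hr (by linarith)
      gcongr
    have h4 : (2 * r) * ‖v‖ ^ 2 ≤ (2 * r) * (8 * ‖j‖ ^ 2 * r) := by linarith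
    exact le_of_mul_le_mul_left h4 (by positivity)
  have hlim : Filter.Tendsto (fun r : ℝ => 8 * ‖j‖ ^ 2 * r) (nhdsWithin 0 (Set.Ioi 0))
      (nhds 0) := by
    have : Continuous fun r : ℝ => 8 * ‖j‖ ^ 2 * r := by fun_prop
    simpa using (this.tendsto 0).mono_left nhdsWithin_le_nhds
  refine absurd (ge_of_tendsto hlim ?_) (not_le.2 hvpos)
  filter_upwards [Ioo_mem_nhdsGT (show (0 : ℝ) < 1 / 4 by norm_num)] with r h
  exact hr r h.1 (by linarith [h.2])
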